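/- Let N ≥ 1, let U₁, …, U_N be 2×2 complex unitary matrices, and let w₁, …, w_N be nonnegative reals summing to 1. Consider the encryption scheme E(ρ) = Σₖ wₖ Uₖ ρ Uₖ†. Then there exist nonnegative reals (p_I, p_X, p_Y, p_Z) summing to 1 such that the Pauli scheme P(ρ) = p_I ρ + p_X XρX + p_Y YρY + p_Z ZρZ satisfies: (a) the Shannon entropy of (p_I, p_X, p_Y, p_Z) is at most the Shannon entropy of (w₁,…,w_N), and (b) for every single-qubit density matrix ρ, ‖P(ρ) − (1/2)I‖_∞ ≤ sup over single-qubit density matrices σ of ‖E(σ) − (1/2)I‖_∞. That is, Pauli encryption schemes are no worse than general single-qubit encryption schemes: any scheme can be replaced by a Pauli scheme using no more entropy and achieving approximation at least as good in the operator norm. -/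

import Mathlib

open Matrix
open scoped ComplexOrder

noncomputable section

/-- The Pauli matrix X. -/
def PX : Matrix (Fin 2) (Fin 2) ℂ := !![0, 1; 1, 0]
/-- The Pauli matrix Y. -/
def PY : Matrix (Fin 2) (Fin 2) ℂ := !![0, -Complex.I; Complex.I, 0]
/-- The Pauli matrix Z. -/
def PZ : Matrix (Fin 2) (Fin 2) ℂ := !![1, 0; 0, -1]

/-- The operator norm of a matrix, i.e. the norm of the induced operator on Euclidean space;
for a Hermitian matrix this is the maximum of the absolute values of its eigenvalues. -/
def opNorm {m : Type*} [Fintype m] [DecidableEq m] (A : Matrix m m ℂ) : ℝ :=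
  ‖Matrix.toEuclideanCLM (𝕜 := ℂ) A‖

/-- `−p·log₂ p`, one term of the Shannon entropy (equals `0` at `p = 0`). -/
def nmlb (p : ℝ) : ℝ := -(p * Real.logb 2 p)

lemma ent_aux {N : ℕ} (w : Fin N → ℝ) (hw : ∀ k, 0 ≤ w k) (p : Fin 4 → ℝ) (hp : ∀ j, 0 ≤ p j)
    (c : Fin 4 → Fin N → ℝ) (hc : ∀ k, ∑ j, c j k ^ 2 = 1)
    (h : ∀ y : Fin 4 → ℝ, ∑ k, w k * (∑ j, y j * c j k) ^ 2 = ∑ j, p j * y j ^ 2) :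
    (∑ i, nmlb (p i)) ≤ (∑ k, nmlb (w k)) := by
  have key : ∀ x, nmlb x = Real.negMulLog x / Real.log 2 := by
    intro x
    simp only [nmlb, Real.negMulLog, Real.logb]
    ring
  simp only [key]
  rw [← Finset.sum_div, ← Finset.sum_div]
  apply div_le_div_of_nonneg_right _ (Real.log_nonneg (by norm_num))
  have hsq : ∀ j, ∑ k, w k * c j k ^ 2 = p j := by
    intro j
    have := h (Pi.single j 1)
    simpa [Pi.single_apply] using this
  have hz : ∀ j k, p j = 0 → w k * c j k ^ 2 = 0 := by
    intro j k hj
    have h1 := hsq j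
    rw [hj, Finset.sum_eq_zero_iff_of_nonneg (fun i _ => mul_nonneg (hw i) (sq_nonneg _))] at h1
    exact h1 k (Finset.mem_univ k)
  set t : Fin 4 → Fin N → ℝ := fun j k => w k * c j k ^ 2 / p j with ht
  have ht0 : ∀ j k, 0 ≤ t j k := fun j k =>
    div_nonneg (mul_nonneg (hw k) (sq_nonneg _)) (hp j)
  have htp : ∀ j k, t j k * p j = w k * c j k ^ 2 := by
    intro j k
    by_cases hj : p j = 0
    · rw [hj, hz j k hj, mul_zero]
    · simp only [ht]; field_simp
  have hrow : ∀ k, ∑ j, t j k ≤ 1 := by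
    intro k
    set s := ∑ j, c j k ^ 2 / p j with hs
    have h1 := h (fun j => c j k / p j)
    have h2 : ∑ j, p j * (c j k / p j) ^ 2 = s := by
      apply Finset.sum_congr rfl
      intro j _
      by_cases hj : p j = 0
      · simp [hj]
      · field_simp
    have h3 : w k * s ^ 2 ≤ s := by
      rw [h2] at h1
      have := Finset.single_le_sum (f := fun k' => w k' * (∑ j, c j k / p j * c j k') ^ 2)
        (fun i _ => mul_nonneg (hw i) (sq_nonneg _)) (Finset.mem_univ k)
      rw [h1] at this
      have e : ∑ j, c j k / p j * c j k = s := by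
        apply Finset.sum_congr rfl
        intro j _
        ring
      simpa only [e] using this
    have h4 : ∑ j, t j k = w k * s := by
      rw [hs, Finset.mul_sum]
      apply Finset.sum_congr rfl
      intro j _
      simp only [ht]; ring
    rw [h4]
    have hs0 : 0 ≤ s := Finset.sum_nonneg fun j _ => div_nonneg (sq_nonneg _) (hp j)
    rcases hs0.eq_or_lt with h0 | h0
    · rw [← h0]; simp
    · by_contra! hcon
      nlinarith
  have hw' : ∀ k, ∑ j, t j k * p j = w k := by
    intro k
    simp only [htp]
    rw [← Finset.mul_sum, hc, mul_one]
  have hcol : ∀ j, ∑ k, t j k * Real.negMulLog (p j) = Real.negMulLog (p j) := by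
    intro j
    by_cases hj : p j = 0
    · simp [hj]
    · rw [← Finset.sum_mul]
      simp only [ht]
      rw [← Finset.sum_div, hsq, div_self hj, one_mul]
  have hj : ∀ k, ∑ j, t j k * Real.negMulLog (p j) ≤ Real.negMulLog (w k) := by
    intro k
    have := Real.concaveOn_negMulLog.le_map_sum (t := Finset.univ)
      (w := fun o : Option (Fin 4) => o.elim (1 - ∑ j, t j k) (fun j => t j k))
      (p := fun o : Option (Fin 4) => o.elim 0 p)
      (by
        rintro (_ | j) _
        · simpa using hrow k
        · exact ht0 j k)
      (by rw [Fintype.sum_option]; simp)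
      (by
        rintro (_ | j) _
        · simp
        · exact hp j)
    rw [Fintype.sum_option, Fintype.sum_option] at this
    simpa [hw' k] using this
  calc ∑ j, Real.negMulLog (p j) = ∑ j, ∑ k, t j k * Real.negMulLog (p j) := by
        simp only [hcol]
    _ = ∑ k, ∑ j, t j k * Real.negMulLog (p j) := Finset.sum_comm
    _ ≤ _ := Finset.sum_le_sum fun k _ => hj k

lemma opNorm_conj (W A B : Matrix (Fin 2) (Fin 2) ℂ) (hW : Wᴴ * W = 1)
    (h : A = W * B * Wᴴ) : opNorm B ≤ opNorm A := by
  have hB : B = Wᴴ * A * W := by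
    rw [h]
    have : Wᴴ * (W * B * Wᴴ) * W = (Wᴴ * W) * B * (Wᴴ * W) := by noncomm_ring
    rw [this, hW]; simp
  have hW2 : W * Wᴴ = 1 := mul_eq_one_comm.mp hW
  have hu : toEuclideanCLM (𝕜 := ℂ) W ∈ unitary _ :=
    Unitary.map_mem (toEuclideanCLM (𝕜 := ℂ) (n := Fin 2)) (Unitary.mem_iff.mpr ⟨hW, hW2⟩)
  unfold opNorm
  rw [hB, map_mul, map_mul, CStarRing.norm_mul_mem_unitary _ hu]
  have e : toEuclideanCLM (𝕜 := ℂ) Wᴴ = star (toEuclideanCLM (𝕜 := ℂ) W) := by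
    rw [← map_star]; rfl
  rw [e, CStarRing.norm_mem_unitary_mul _ (Unitary.star_mem hu)]

lemma bdd_aux (f : Matrix (Fin 2) (Fin 2) ℂ → Matrix (Fin 2) (Fin 2) ℂ) (hf : Continuous f) :
    BddAbove (Set.range fun σ : {m : Matrix (Fin 2) (Fin 2) ℂ // m.PosSemidef ∧ m.trace = 1} =>
      opNorm (f σ.1)) := by
  have hcont : Continuous fun m => opNorm (f m) := by
    have : Continuous (toEuclideanCLM (𝕜 := ℂ) (n := Fin 2)).toAlgEquiv.toLinearMap :=
      LinearMap.continuous_of_finiteDimensional _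
    exact (this.comp hf).norm
  have hK : IsCompact (Set.pi Set.univ fun _ : Fin 2 => Set.pi Set.univ fun _ : Fin 2 =>
      Metric.closedBall (0 : ℂ) 1) :=
    isCompact_univ_pi fun _ => isCompact_univ_pi fun _ => isCompact_closedBall _ _
  refine (hK.bddAbove_image (f := fun m => opNorm (f m)) hcont.continuousOn).mono ?_
  rintro _ ⟨⟨m, hm, htr⟩, rfl⟩
  refine ⟨m, ?_, rfl⟩
  have h0 := hm.diag_nonneg (i := 0)
  have h1 := hm.diag_nonneg (i := 1)
  have hd := hm.det_nonneg
  have hh : m 1 0 = star (m 0 1) := (hm.1.apply 1 0).symm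
  rw [det_fin_two, hh] at hd
  rw [trace_fin_two] at htr
  rw [Complex.le_def] at h0 h1 hd
  have htr' := congrArg Complex.re htr
  simp at h0 h1 hd htr'
  have n01 : ‖m 0 1‖ ≤ 1 := by
    rw [← abs_of_nonneg (norm_nonneg (m 0 1)), ← sq_le_one_iff_abs_le_one, ← Complex.normSq_eq_norm_sq, Complex.normSq_apply]
    rw [← h0.2, ← h1.2] at hd
    nlinarith [hd.1]
  have n00 : ‖m 0 0‖ ≤ 1 := by
    rw [← abs_of_nonneg (norm_nonneg (m 0 0)), ← sq_le_one_iff_abs_le_one, ← Complex.normSq_eq_norm_sq, Complex.normSq_apply, ← h0.2]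
    nlinarith
  have n11 : ‖m 1 1‖ ≤ 1 := by
    rw [← abs_of_nonneg (norm_nonneg (m 1 1)), ← sq_le_one_iff_abs_le_one, ← Complex.normSq_eq_norm_sq, Complex.normSq_apply, ← h1.2]
    nlinarith
  have n10 : ‖m 1 0‖ ≤ 1 := by rw [hh, norm_star]; exact n01
  intro i _ j _
  rw [mem_closedBall_zero_iff]
  fin_cases i <;> fin_cases j <;> assumption

def Qm (a : Fin 4 → ℝ) : Matrix (Fin 2) (Fin 2) ℂ :=
  !![(a 0 : ℂ) + a 3 * Complex.I, (a 2 : ℂ) + a 1 * Complex.I;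
    -(a 2 : ℂ) + a 1 * Complex.I, (a 0 : ℂ) - a 3 * Complex.I]

lemma Qm_clifford (a b : Fin 4 → ℝ) :
    (Qm a)ᴴ * Qm b + (Qm b)ᴴ * Qm a = ((2 * ∑ i, a i * b i : ℝ) : ℂ) • 1 := by
  ext i j
  fin_cases i <;> fin_cases j <;>
    simp [Qm, Matrix.mul_apply, Fin.sum_univ_succ, Complex.ext_iff] <;> (try constructor) <;> ring

lemma Qm_sum (O : Fin 4 → Fin 4 → ℝ) (c : Fin 4 → ℝ) :
    Qm (fun i => ∑ j, O i j * c j) = ∑ j, c j • Qm (fun i => O i j) := by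
  ext i j
  fin_cases i <;> fin_cases j <;>
    simp [Qm, Fin.sum_univ_succ, Complex.ext_iff] <;> (try constructor) <;> ring

lemma unitary_form (U : Matrix (Fin 2) (Fin 2) ℂ) (hU : U ∈ Matrix.unitaryGroup (Fin 2) ℂ) :
    ∃ (a : Fin 4 → ℝ) (c : ℂ), c * star c = 1 ∧ ∑ i, a i ^ 2 = 1 ∧ U = c • Qm a := by
  have hd := Matrix.det_of_mem_unitary hU
  obtain ⟨c, hc⟩ : ∃ c : ℂ, c ^ 2 = U.det := IsAlgClosed.exists_pow_nat_eq _ (by norm_num)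
  have hnd : ‖U.det‖ = 1 := CStarRing.norm_of_mem_unitary hd
  have hnc : ‖c‖ = 1 := by
    rw [← hc, norm_pow] at hnd
    exact (pow_eq_one_iff_of_nonneg (norm_nonneg _) (by norm_num)).mp hnd
  have hcc : c * star c = 1 := by
    have := Complex.mul_conj c
    rw [Complex.normSq_eq_norm_sq, hnc] at this
    simpa using this
  have hcc' : star c * c = 1 := by rw [mul_comm]; exact hcc
  have h1 : U * Uᴴ = 1 := (Matrix.mem_unitaryGroup_iff).mp hU
  have h2 : Uᴴ = U.det⁻¹ • U.adjugate := by
    have hdu : U.det ≠ 0 := by intro h; rw [h] at hnd; simp at hnd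
    have h3 : U.adjugate * U = U.det • 1 := Matrix.adjugate_mul U
    calc Uᴴ = U.det⁻¹ • ((U.det • (1 : Matrix (Fin 2) (Fin 2) ℂ)) * Uᴴ) := by
          rw [smul_mul_assoc, one_mul, smul_smul, inv_mul_cancel₀ hdu, one_smul]
      _ = _ := by rw [← h3, mul_assoc, h1, mul_one]
  have hinv : U.det⁻¹ = star c * star c := by
    rw [← hc]; symm
    apply eq_inv_of_mul_eq_one_left
    linear_combination (c * star c + 1) * hcc
  rw [hinv, adjugate_fin_two] at h2
  set α := star c * U 0 0 with hα
  set β := star c * U 0 1 with hβ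
  have e00 := congrFun (congrFun h2 0) 0
  have e10 := congrFun (congrFun h2 1) 0
  simp [Matrix.conjTranspose_apply] at e00 e10
  have hU00 : U 0 0 = c * α := by rw [hα]; linear_combination -(U 0 0) * hcc
  have hU01 : U 0 1 = c * β := by rw [hβ]; linear_combination -(U 0 1) * hcc
  have hU11 : U 1 1 = c * star α := by
    rw [hα]; simp only [star_mul', star_star] at *
    simp only [Complex.star_def] at *
    rw [e00]
    linear_combination (-(U 1 1)) * (c * (starRingEnd ℂ) c + 1) * hcc
  have hU10 : U 1 0 = c * (-star β) := by
    rw [hβ]; simp only [star_mul', star_star] at *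
    simp only [Complex.star_def] at *
    rw [e10]
    linear_combination (-(U 1 0)) * (c * (starRingEnd ℂ) c + 1) * hcc
  have hn : Complex.normSq α + Complex.normSq β = 1 := by
    have := congrFun (congrFun h1 0) 0
    simp [Matrix.mul_apply, Fin.sum_univ_two, Matrix.conjTranspose_apply, hU00, hU01] at this
    have h4 : (α * (starRingEnd ℂ) α + β * (starRingEnd ℂ) β) = 1 := by
      simp only [Complex.star_def] at *
      linear_combination this - (α * (starRingEnd ℂ) α + β * (starRingEnd ℂ) β) * hcc
    rw [Complex.mul_conj, Complex.mul_conj] at h4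
    exact_mod_cast h4
  refine ⟨![α.re, β.im, β.re, α.im], c, hcc, ?_, ?_⟩
  · simp [Fin.sum_univ_succ]
    rw [Complex.normSq_apply, Complex.normSq_apply] at hn
    linarith
  · ext i j
    fin_cases i <;> fin_cases j
    · simp [Qm, hU00]
    · simp [Qm, hU01]
    · simp only [Qm, Fin.mk_one, Fin.zero_eta, hU10]
      have : -star β = -(β.re : ℂ) + β.im * Complex.I := by simp [Complex.ext_iff]
      rw [this]; simp
    · simp only [Qm, Fin.mk_one, Fin.zero_eta, hU11]
      simp
      left
      simp [Complex.ext_iff]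

lemma frame (A1 A2 A3 : Matrix (Fin 2) (Fin 2) ℂ) (h1 : A1ᴴ = A1) (h2 : A2ᴴ = A2) (h3 : A3ᴴ = A3)
    (s1 : A1 * A1 = 1) (s2 : A2 * A2 = 1) (s3 : A3 * A3 = 1)
    (h13 : A1 * A3 = -(A3 * A1)) (h12 : A1 * A2 = -(A2 * A1)) (h23 : A2 * A3 = -(A3 * A2)) :
    ∃ (F : Matrix (Fin 2) (Fin 2) ℂ) (c : ℂ), Fᴴ * F = 1 ∧ c * star c = 1 ∧
      A1 = F * PX * Fᴴ ∧ A2 = c • (F * PY * Fᴴ) ∧ A3 = F * PZ * Fᴴ := by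
  have hne : 1 + A3 ≠ 0 := by
    intro h
    have e : A3 = -1 := (neg_eq_of_add_eq_zero_right h).symm
    rw [e] at h13
    simp at h13
    have h4 : A1 = 0 := by
      ext i j
      have := congrFun (congrFun h13 i) j
      simp only [Matrix.neg_apply] at this
      simp only [Matrix.zero_apply]
      linear_combination (-1/2) * this
    rw [h4] at s1
    simp at s1
  obtain ⟨i0, j0, hij⟩ : ∃ i j, (1 + A3) i j ≠ 0 := by
    by_contra! hcon
    exact hne (Matrix.ext hcon)
  set v : Fin 2 → ℂ := (1 + A3).col j0 with hv
  have hv0 : v i0 ≠ 0 := hij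
  have hA3v : A3 *ᵥ v = v := by
    have : A3 * (1 + A3) = 1 + A3 := by rw [mul_add, s3, mul_one, add_comm]
    ext i
    exact congrFun (congrFun this i) j0
  set u := A1 *ᵥ v with hu
  have hA1u : A1 *ᵥ u = v := by rw [hu, Matrix.mulVec_mulVec, s1, one_mulVec]
  have hA3u : A3 *ᵥ u = -u := by
    have : A3 * A1 = -(A1 * A3) := by rw [h13, neg_neg]
    rw [hu, Matrix.mulVec_mulVec, this, neg_mulVec, ← Matrix.mulVec_mulVec, hA3v]
  set G : Matrix (Fin 2) (Fin 2) ℂ := !![v 0, u 0; v 1, u 1] with hG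
  have g1 : A1 * G = G * PX := by
    ext i j
    have a := congrFun hA1u i
    have b := congrFun hu.symm i
    fin_cases i <;> fin_cases j <;>
      simp [hG, PX, Matrix.mul_apply, Fin.sum_univ_two, Matrix.mulVec, dotProduct] at a b ⊢ <;>
      assumption
  have g3 : A3 * G = G * PZ := by
    ext i j
    have a := congrFun hA3u i
    have b := congrFun hA3v i
    fin_cases i <;> fin_cases j <;>
      simp [hG, PZ, Matrix.mul_apply, Fin.sum_univ_two, Matrix.mulVec, dotProduct] at a b ⊢ <;>
      assumption
  have PXh : PXᴴ = PX := by
    ext i j; fin_cases i <;> fin_cases j <;> simp [PX]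
  have PZh : PZᴴ = PZ := by
    ext i j; fin_cases i <;> fin_cases j <;> simp [PZ]
  have g1' : Gᴴ * A1 = PX * Gᴴ := by
    have := congrArg conjTranspose g1
    rwa [conjTranspose_mul, conjTranspose_mul, h1, PXh] at this
  have g3' : Gᴴ * A3 = PZ * Gᴴ := by
    have := congrArg conjTranspose g3
    rwa [conjTranspose_mul, conjTranspose_mul, h3, PZh] at this
  set S := Gᴴ * G with hS
  have c1 : S * PX = PX * S := by
    rw [hS, mul_assoc, ← g1, ← mul_assoc, g1', mul_assoc]
  have c3 : S * PZ = PZ * S := by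
    rw [hS, mul_assoc, ← g3, ← mul_assoc, g3', mul_assoc]
  set s : ℝ := Complex.normSq (v 0) + Complex.normSq (v 1) with hs
  have hspos : 0 < s := by
    have a0 := Complex.normSq_nonneg (v 0)
    have a1 := Complex.normSq_nonneg (v 1)
    have := Complex.normSq_pos.mpr hv0
    fin_cases i0
    · simp only [Fin.zero_eta] at this; linarith
    · simp only [Fin.mk_one] at this; linarith
  have hS00 : S 0 0 = (s : ℂ) := by
    simp [hS, hG, Matrix.mul_apply, Fin.sum_univ_two, hs, ← Complex.mul_conj, mul_comm]
  have hS1 : S = (s : ℂ) • 1 := by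
    have x00 := congrFun (congrFun c1 0) 1
    have z01 := congrFun (congrFun c3 0) 1
    have z10 := congrFun (congrFun c3 1) 0
    simp [PX, PZ, Matrix.mul_apply, Fin.sum_univ_two] at x00 z01 z10
    have y01 : S 0 1 = 0 := by linear_combination (-1/2) * z01
    have y10 : S 1 0 = 0 := by linear_combination (1/2) * z10
    ext i j
    fin_cases i <;> fin_cases j <;> simp [hS00, y01, y10, ← x00]
  set r : ℂ := (((Real.sqrt s)⁻¹ : ℝ) : ℂ) with hr
  have hrr : star r * r * s = 1 := by
    rw [hr, Complex.star_def, Complex.conj_ofReal]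
    norm_cast
    have := Real.mul_self_sqrt hspos.le
    have h5 : Real.sqrt s ≠ 0 := (Real.sqrt_pos.mpr hspos).ne'
    field_simp
    nlinarith
  set F := r • G with hF
  have f1 : A1 * F = F * PX := by rw [hF, mul_smul_comm, g1, smul_mul_assoc]
  have f3 : A3 * F = F * PZ := by rw [hF, mul_smul_comm, g3, smul_mul_assoc]
  have hFF : Fᴴ * F = 1 := by
    rw [hF, conjTranspose_smul, smul_mul_assoc, mul_smul_comm, smul_smul, ← hS, hS1, smul_smul,
      hrr, one_smul]
  have hFF' : F * Fᴴ = 1 := mul_eq_one_comm.mp hFF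
  have e1 : A1 = F * PX * Fᴴ := by rw [← f1, mul_assoc, hFF', mul_one]
  have e3 : A3 = F * PZ * Fᴴ := by rw [← f3, mul_assoc, hFF', mul_one]
  set D := Fᴴ * A2 * F with hD
  have f1' : Fᴴ * A1 = PX * Fᴴ := by
    have := congrArg conjTranspose f1
    rwa [conjTranspose_mul, conjTranspose_mul, h1, PXh] at this
  have f3' : Fᴴ * A3 = PZ * Fᴴ := by
    have := congrArg conjTranspose f3
    rwa [conjTranspose_mul, conjTranspose_mul, h3, PZh] at this
  have d1 : PX * D = -(D * PX) := by
    calc PX * D = (PX * Fᴴ) * A2 * F := by rw [hD]; noncomm_ring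
      _ = Fᴴ * (A1 * A2) * F := by rw [← f1']; noncomm_ring
      _ = -(Fᴴ * A2 * (A1 * F)) := by rw [h12]; noncomm_ring
      _ = _ := by rw [f1, hD]; noncomm_ring
  have d3 : D * PZ = -(PZ * D) := by
    calc D * PZ = Fᴴ * A2 * (F * PZ) := by rw [hD]; noncomm_ring
      _ = Fᴴ * (A2 * A3) * F := by rw [← f3]; noncomm_ring
      _ = -((Fᴴ * A3) * A2 * F) := by rw [h23]; noncomm_ring
      _ = _ := by rw [f3', hD]; noncomm_ring
  have dd : D * Dᴴ = 1 := by
    have : Dᴴ = D := by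
      rw [hD, conjTranspose_mul, conjTranspose_mul, conjTranspose_conjTranspose, h2, mul_assoc]
    rw [this]
    calc D * D = Fᴴ * A2 * (F * Fᴴ) * A2 * F := by rw [hD]; noncomm_ring
      _ = Fᴴ * (A2 * A2) * F := by rw [hFF']; noncomm_ring
      _ = 1 := by rw [s2, mul_one, hFF]
  have hDY : D = (Complex.I * D 0 1) • PY := by
    have x := congrFun (congrFun d1 0) 0
    have z0 := congrFun (congrFun d3 0) 0
    have z1 := congrFun (congrFun d3 1) 1
    simp only [Matrix.neg_apply, Matrix.mul_apply, Fin.sum_univ_two] at x z0 z1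
    simp [PX, PZ] at x z0 z1
    have y0 : D 0 0 = 0 := by grind
    have y1 : D 1 1 = 0 := by grind
    ext i j
    fin_cases i <;> fin_cases j <;> simp [PY, y0, y1]
    · linear_combination (D 0 1) * Complex.I_mul_I
    · linear_combination x - (D 0 1) * Complex.I_mul_I
  refine ⟨F, Complex.I * D 0 1, hFF, ?_, e1, ?_, e3⟩
  · have x := congrFun (congrFun dd 0) 0
    have z0 := congrFun (congrFun hDY 0) 0
    simp [PY] at z0
    simp [Matrix.mul_apply, Fin.sum_univ_two, Matrix.conjTranspose_apply, z0] at x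
    simp only [star_mul', Complex.star_def, Complex.conj_I]
    linear_combination x - D 0 1 * (starRingEnd ℂ) (D 0 1) * Complex.I_mul_I
  · calc A2 = (F * Fᴴ) * A2 * (F * Fᴴ) := by rw [hFF']; simp
      _ = F * D * Fᴴ := by rw [hD]; noncomm_ring
      _ = _ := by conv_lhs => rw [hDY, mul_smul_comm, smul_mul_assoc]

lemma spec_aux (T : Matrix (Fin 4) (Fin 4) ℝ) (hT : T.IsHermitian) :
    ∃ (O : Matrix (Fin 4) (Fin 4) ℝ) (p : Fin 4 → ℝ), Oᵀ * O = 1 ∧ O * Oᵀ = 1 ∧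
      Oᵀ * T * O = diagonal p := by
  refine ⟨hT.eigenvectorUnitary, hT.eigenvalues, ?_, ?_, ?_⟩
  · have := Unitary.coe_star_mul_self hT.eigenvectorUnitary
    simpa [star_eq_conjTranspose] using this
  · have := Unitary.coe_mul_star_self hT.eigenvectorUnitary
    simpa [star_eq_conjTranspose] using this
  · have := hT.conjStarAlgAut_star_eigenvectorUnitary
    rw [Unitary.conjStarAlgAut_apply] at this
    simpa [star_eq_conjTranspose, Function.comp_def] using this

lemma mix_aux {N : ℕ} (w : Fin N → ℝ) (p : Fin 4 → ℝ) (c : Fin 4 → Fin N → ℝ)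
    (h : ∀ j l, ∑ k, w k * (c j k * c l k) = if j = l then p j else 0)
    {V : Type*} [AddCommGroup V] [Module ℝ V] (B : Fin 4 → Fin 4 → V) :
    ∑ k, w k • ∑ j, ∑ l, (c j k * c l k) • B j l = ∑ j, p j • B j j := by
  simp only [Finset.smul_sum, smul_smul]
  rw [Finset.sum_comm]
  apply Finset.sum_congr rfl
  intro j _
  rw [Finset.sum_comm]
  simp only [← Finset.sum_smul, h]
  simp

theorem frame_Q (Q : Fin 4 → Matrix (Fin 2) (Fin 2) ℂ)
    (hQ : ∀ j l, (Q j)ᴴ * Q l + (Q l)ᴴ * Q j = ((if j = l then 2 else 0 : ℝ) : ℂ) • 1) :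
    ∃ (W F : Matrix (Fin 2) (Fin 2) ℂ), Wᴴ * W = 1 ∧ Fᴴ * F = 1 ∧
      ∀ (ρ : Matrix (Fin 2) (Fin 2) ℂ),
        Q 0 * (F * ρ * Fᴴ) * (Q 0)ᴴ = W * ρ * Wᴴ ∧
        Q 1 * (F * ρ * Fᴴ) * (Q 1)ᴴ = W * (PX * ρ * PX) * Wᴴ ∧
        Q 2 * (F * ρ * Fᴴ) * (Q 2)ᴴ = W * (PY * ρ * PY) * Wᴴ ∧
        Q 3 * (F * ρ * Fᴴ) * (Q 3)ᴴ = W * (PZ * ρ * PZ) * Wᴴ := by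
  have hself : ∀ j, (Q j)ᴴ * Q j = 1 := by
    intro j
    have := hQ j j
    rw [if_pos rfl, ← two_smul ℂ] at this
    have h2 : ((2 : ℝ) : ℂ) = 2 := by norm_num
    rw [h2] at this
    exact smul_right_injective _ (two_ne_zero' ℂ) this
  have h00 : Q 0 * (Q 0)ᴴ = 1 := mul_eq_one_comm.mp (hself 0)
  have hanti : ∀ j l, j ≠ l → (Q j)ᴴ * Q l = -((Q l)ᴴ * Q j) := by
    intro j l hjl
    have := hQ j l
    rw [if_neg hjl] at this
    simp only [Complex.ofReal_zero, zero_smul] at this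
    exact eq_neg_of_add_eq_zero_left this
  set A : Fin 4 → Matrix (Fin 2) (Fin 2) ℂ := fun j => Complex.I • ((Q 0)ᴴ * Q j) with hA
  have hAh : ∀ j, j ≠ 0 → (A j)ᴴ = A j := by
    intro j hj
    simp only [hA]
    rw [conjTranspose_smul, conjTranspose_mul, conjTranspose_conjTranspose, hanti j 0 hj]
    simp
  have hmul : ∀ j l, j ≠ 0 → A j * A l = (Q j)ᴴ * Q l := by
    intro j l hj
    rw [← hAh j hj]
    simp only [hA]
    rw [conjTranspose_smul, conjTranspose_mul, conjTranspose_conjTranspose, smul_mul_assoc,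
      mul_smul_comm, smul_smul]
    have e : (Q j)ᴴ * Q 0 * ((Q 0)ᴴ * Q l) = (Q j)ᴴ * (Q 0 * (Q 0)ᴴ) * Q l := by noncomm_ring
    rw [e, h00]
    simp
  have hQA : ∀ j, Q j = (-Complex.I) • (Q 0 * A j) := by
    intro j
    simp only [hA]
    rw [mul_smul_comm, smul_smul, ← mul_assoc, h00]
    simp
  obtain ⟨F, c, hF, hc, e1, e2, e3⟩ := frame (A 1) (A 2) (A 3) (hAh 1 (by decide))
    (hAh 2 (by decide)) (hAh 3 (by decide))
    (by rw [hmul _ _ (by decide), hself]) (by rw [hmul _ _ (by decide), hself])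
    (by rw [hmul _ _ (by decide), hself])
    (by rw [hmul _ _ (by decide), hmul _ _ (by decide), hanti _ _ (by decide)])
    (by rw [hmul _ _ (by decide), hmul _ _ (by decide), hanti _ _ (by decide)])
    (by rw [hmul _ _ (by decide), hmul _ _ (by decide), hanti _ _ (by decide)])
  have gen : ∀ (R P : Matrix (Fin 2) (Fin 2) ℂ) (d : ℂ), d * star d = 1 → Pᴴ = P →
      R = d • (Q 0 * (F * P * Fᴴ)) → ∀ ρ, R * (F * ρ * Fᴴ) * Rᴴ =
        (Q 0 * F) * (P * ρ * P) * (Q 0 * F)ᴴ := by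
    intro R P d hd hP hR ρ
    rw [hR]
    simp only [conjTranspose_smul, conjTranspose_mul, conjTranspose_conjTranspose, hP,
      smul_mul_assoc, mul_smul_comm, smul_smul]
    rw [mul_comm, hd, one_smul]
    have : Q 0 * (F * P * Fᴴ) * (F * ρ * Fᴴ) * (F * (P * Fᴴ) * (Q 0)ᴴ) =
      Q 0 * F * P * (Fᴴ * F) * ρ * (Fᴴ * F) * P * Fᴴ * (Q 0)ᴴ := by noncomm_ring
    rw [this, hF]
    noncomm_ring
  refine ⟨Q 0 * F, F, ?_, hF, fun ρ => ⟨?_, ?_, ?_, ?_⟩⟩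
  · rw [conjTranspose_mul]
    have : Fᴴ * (Q 0)ᴴ * (Q 0 * F) = Fᴴ * ((Q 0)ᴴ * Q 0) * F := by noncomm_ring
    rw [this, hself, mul_one, hF]
  · rw [conjTranspose_mul]; noncomm_ring
  · refine gen _ _ (-Complex.I) (by simp) ?_ ?_ ρ
    · ext i j; fin_cases i <;> fin_cases j <;> simp [PX]
    · rw [hQA 1, e1]
  · refine gen _ _ (-Complex.I * c) ?_ ?_ ?_ ρ
    · simp only [star_mul', star_neg, Complex.star_def, Complex.conj_I] at *
      linear_combination -Complex.I * Complex.I * hc - Complex.I_mul_I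
    · ext i j; fin_cases i <;> fin_cases j <;> simp [PY]
    · rw [hQA 2, e2, mul_smul_comm, smul_smul]
  · refine gen _ _ (-Complex.I) (by simp) ?_ ?_ ρ
    · ext i j; fin_cases i <;> fin_cases j <;> simp [PZ]
    · rw [hQA 3, e3]

/-- Pauli encryption schemes are no worse than general single-qubit encryption schemes: any
scheme `E(ρ) = Σₖ wₖ Uₖ ρ Uₖ†` can be replaced by a Pauli scheme
`P(ρ) = p₀ρ + p₁XρX + p₂YρY + p₃ZρZ` using no more Shannon entropy and achieving
worst-case operator-norm approximation at least as good. -/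
theorem pauli_schemes_optimal (N : ℕ) (hN : 1 ≤ N)
    (U : Fin N → Matrix (Fin 2) (Fin 2) ℂ)
    (hU : ∀ k, U k ∈ Matrix.unitaryGroup (Fin 2) ℂ)
    (w : Fin N → ℝ) (hw : ∀ k, 0 ≤ w k) (hsum : ∑ k, w k = 1) :
    ∃ p : Fin 4 → ℝ, (∀ i, 0 ≤ p i) ∧ (∑ i, p i = 1)
      ∧ (∑ i, nmlb (p i)) ≤ (∑ k, nmlb (w k))
      ∧ ∀ ρ : Matrix (Fin 2) (Fin 2) ℂ, ρ.PosSemidef → ρ.trace = 1 →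
          opNorm (p 0 • ρ + p 1 • (PX * ρ * PX) + p 2 • (PY * ρ * PY) + p 3 • (PZ * ρ * PZ)
              - (1/2 : ℝ) • (1 : Matrix (Fin 2) (Fin 2) ℂ))
            ≤ ⨆ σ : {m : Matrix (Fin 2) (Fin 2) ℂ // m.PosSemidef ∧ m.trace = 1},
                opNorm ((∑ k, w k • (U k * σ.1 * (U k)ᴴ))
                  - (1/2 : ℝ) • (1 : Matrix (Fin 2) (Fin 2) ℂ)) := by
  choose a d hd ha hUa using fun k => unitary_form (U k) (hU k)
  set T : Matrix (Fin 4) (Fin 4) ℝ := Matrix.of fun i j => ∑ k, w k * (a k i * a k j) with hTdef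
  have hT : T.IsHermitian := by
    ext i j
    simp [hTdef, mul_comm]
  obtain ⟨O, p, hO1, hO2, hOT⟩ := spec_aux T hT
  set c : Fin 4 → Fin N → ℝ := fun j k => ∑ i, O i j * a k i with hcdef
  have horth : ∀ j l, ∑ k, w k * (c j k * c l k) = if j = l then p j else 0 := by
    intro j l
    have := congrFun (congrFun hOT j) l
    rw [Matrix.diagonal_apply] at this
    rw [← this]
    simp only [hcdef, hTdef, Matrix.mul_apply, Matrix.transpose_apply, Matrix.of_apply,
      Finset.sum_mul, Finset.mul_sum]
    rw [Finset.sum_comm]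
    apply Finset.sum_congr rfl
    intro x _
    rw [Finset.sum_comm]
    apply Finset.sum_congr rfl
    intro y _
    apply Finset.sum_congr rfl
    intro k _
    ring
  have hac : ∀ k i, a k i = ∑ j, O i j * c j k := by
    intro k i
    have : a k = O *ᵥ (Oᵀ *ᵥ a k) := by rw [Matrix.mulVec_mulVec, hO2, one_mulVec]
    exact congrFun this i
  have hc1 : ∀ k, ∑ j, c j k ^ 2 = 1 := by
    intro k
    rw [← ha k]
    have e : (Oᵀ *ᵥ a k) ⬝ᵥ (Oᵀ *ᵥ a k) = a k ⬝ᵥ a k := by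
      rw [Matrix.dotProduct_mulVec, Matrix.vecMul_transpose, Matrix.mulVec_mulVec, hO2, one_mulVec]
    simp only [pow_two]
    exact e
  have hpj : ∀ j, p j = ∑ k, w k * (c j k * c j k) := fun j => by rw [horth j j, if_pos rfl]
  have hp0 : ∀ j, 0 ≤ p j := fun j => by
    rw [hpj]
    exact Finset.sum_nonneg fun k _ => mul_nonneg (hw k) (mul_self_nonneg _)
  refine ⟨p, hp0, ?_, ?_, ?_⟩
  · simp only [hpj]
    rw [Finset.sum_comm, ← hsum]
    apply Finset.sum_congr rfl
    intro k _
    rw [← Finset.mul_sum]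
    have := hc1 k
    simp only [pow_two] at this
    rw [this, mul_one]
  · refine ent_aux w hw p hp0 c hc1 ?_
    intro y
    have := mix_aux w p c horth (fun j l => y j * y l)
    simp only [smul_eq_mul] at this
    simp only [pow_two]
    rw [← this]
    apply Finset.sum_congr rfl
    intro k _
    rw [Finset.sum_mul_sum]
    congr 1
    apply Finset.sum_congr rfl
    intro j _
    apply Finset.sum_congr rfl
    intro l _
    ring
  · intro ρ hρ htr
    set Q : Fin 4 → Matrix (Fin 2) (Fin 2) ℂ := fun j => Qm (fun i => O i j) with hQdef
    have hE : ∀ σ, ∑ k, w k • (U k * σ * (U k)ᴴ) = ∑ j, p j • (Q j * σ * (Q j)ᴴ) := by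
      intro σ
      rw [← mix_aux w p c horth (fun j l => Q j * σ * (Q l)ᴴ)]
      apply Finset.sum_congr rfl
      intro k _
      congr 1
      have e : Qm (a k) = ∑ j, c j k • Q j := by
        rw [← Qm_sum O (fun j => c j k)]
        congr 1
        ext i
        exact hac k i
      have e2 : U k * σ * (U k)ᴴ = Qm (a k) * σ * (Qm (a k))ᴴ := by
        rw [hUa k]
        simp only [conjTranspose_smul, smul_mul_assoc, mul_smul_comm, smul_smul]
        rw [mul_comm (star _), hd, one_smul]
      rw [e2, e, conjTranspose_sum, Finset.sum_mul, Finset.sum_mul_sum]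
      apply Finset.sum_congr rfl
      intro j _
      apply Finset.sum_congr rfl
      intro l _
      simp only [conjTranspose_smul, smul_mul_assoc, mul_smul_comm, smul_smul, star_trivial]
      rw [mul_comm]
    obtain ⟨W, F, hW, hF, hall⟩ := frame_Q Q (by
      intro j l
      simp only [hQdef]
      rw [Qm_clifford]
      have := congrFun (congrFun hO1 j) l
      rw [Matrix.mul_apply, Matrix.one_apply] at this
      simp only [Matrix.transpose_apply] at this
      rw [this]
      congr 2
      split_ifs <;> norm_num)
    obtain ⟨q0, q1, q2, q3⟩ := hall ρ
    have hW2 : W * Wᴴ = 1 := mul_eq_one_comm.mp hW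
    have hbdd := bdd_aux (fun σ => (∑ k, w k • (U k * σ * (U k)ᴴ))
      - (1/2 : ℝ) • (1 : Matrix (Fin 2) (Fin 2) ℂ)) (by fun_prop)
    refine le_trans ?_ (le_ciSup hbdd ⟨F * ρ * Fᴴ, hρ.mul_mul_conjTranspose_same F, ?_⟩)
    · refine opNorm_conj W _ _ hW ?_
      simp only [hE, Fin.sum_univ_four, q0, q1, q2, q3]
      simp only [mul_sub, sub_mul, mul_add, add_mul, mul_smul_comm, smul_mul_assoc, mul_one, hW2]
    · rw [Matrix.trace_mul_comm, ← mul_assoc, hF, one_mul, htr]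

end
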